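/- Let d = 1 and r > 0. For every t > 0 and every positive integer n, let u_{t,n} be a mild solution of ∂_t u = (1/2)Δu - u² (on (0,∞) × ℝ) with initial data n·1_{B(rt)}, and set u_t(x) := sup_{n ≥ 1} u_{t,n}(t,x). Then lim_{t→∞} ∫_ℝ u_t(x) dx = 2r and lim_{t→∞} ∫_ℝ (1 - e^{-u_t(x)}) dx = 2r. (This is the analytic core of the theorem that for a critical binary super-Brownian motion started from a Poisson random measure with Lebesgue intensity on ℝ, the radius R_t of the largest empty ball centered at the origin satisfies lim_{t→∞} P(R_t/t ≥ r) = e^{-2r}.) -/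

import Mathlib

/-!
Write `P_s` for the heat semigroup on `ℝ`, fix `t`, and let `u` be the solution with data
`n · 1_{B(R)}`, `R = rt`. The proof never differentiates `u` in space; it uses only Duhamel's
formula restarted at intermediate times (`IsMild.restart`),
`P_s u(t-s) (x) = u(t,x) + ∫₀ˢ P_σ (u(t-σ)²)(x) dσ`.

* *Bound uniform in `n` and `x`.* Put `F(s) = P_s u(t-s) (x)`. Jensen's inequality gives
  `F' ≥ F²`, and `F(t) ≤ n`, so `u(t,x) = F(0) ≤ n / (1 + n t) ≤ 1 / t`
  (`integral_rate_bounds`, `IsMild.toReal_mul_le`, `IsMild.le_inv`).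
* *Decay outside the ball.* Since `P_s` maps `e^{-λx}` to `e^{λ²s/2} e^{-λx}`, the bound
  `u(t,x) ≤ t⁻¹ exp (3 - (x - R)/√t)` passes from time `t` to time `2t`, thanks to
  `u(2t) ≤ P_t u(t)` and `u(2t) ≤ 1/(2t)`. It holds for `t ≤ 1/n` because of the linear bound
  `u ≤ P_t (n 1_B)`, hence for all `t`, with a constant that does not depend on `n`
  (`IsMild.exp_bound`). By symmetry the same holds to the left of the ball. Integrating,
  `∫ sup_n u ≤ t⁻¹ (2R + 8√t) = 2r + 8/√t`.
* *Lower bound.* The solution with `n = 1` already suffices: there `u(t-s) ≤ 1/(1+t-s)`, so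
  `F' ≤ F/(1+t-s)`, and `u(t,x) ≥ P_t 1_{B(R)}(x) / (1+t)`. Integrating,
  `∫ u ≥ 2rt/(1+t)` (`integral_rate_bounds'`, `IsMild.heatP_le_mul`).

The integral of `1 - e^{-v}`, `v = sup_n u`, is handled through
`v / (1+v) ≤ 1 - e^{-v} ≤ v` and `v ≤ 1/t`.
-/

open MeasureTheory Filter Set Metric
open scoped ENNReal

/-- The `d`-dimensional heat kernel `p_t(x,y) = (2πt)^{-d/2} exp(-‖x-y‖²/(2t))`. -/
noncomputable def heatKernel (d : ℕ) (t : ℝ) (x y : EuclideanSpace ℝ (Fin d)) : ℝ :=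
  (2 * Real.pi * t) ^ (-(d : ℝ) / 2) * Real.exp (-‖x - y‖ ^ 2 / (2 * t))

/-- `u : (0,∞) × ℝ^d → [0,∞)` is a mild solution of `∂ₜu = (1/2)Δu - u²` with initial
data `φ` if it is measurable, nonnegative, and satisfies for all `t > 0`, `x ∈ ℝ^d`:
`u(t,x) + ∫₀ᵗ ∫ p_s(x,y) u(t-s,y)² dy ds = ∫ p_t(x,y) φ(y) dy` (equality in `[0,∞]`). -/
def IsMildSolution (d : ℕ) (φ : EuclideanSpace ℝ (Fin d) → ℝ)
    (u : ℝ → EuclideanSpace ℝ (Fin d) → ℝ) : Prop :=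
  Measurable (Function.uncurry u) ∧
  (∀ t x, 0 ≤ u t x) ∧
  ∀ t x, 0 < t →
    ENNReal.ofReal (u t x) +
        (∫⁻ s in Set.Ioo (0 : ℝ) t, ∫⁻ y,
          ENNReal.ofReal (heatKernel d s x y * u (t - s) y ^ 2)) =
      ∫⁻ y, ENNReal.ofReal (heatKernel d t x y * φ y)


/-! ### The heat semigroup on the line -/

/-- The one-dimensional heat kernel, with values in `[0,∞]`. -/
noncomputable def hk (s x y : ℝ) : ℝ≥0∞ :=
  ENNReal.ofReal ((√(2 * Real.pi * s))⁻¹ * Real.exp (-(x - y) ^ 2 / (2 * s)))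

/-- The heat semigroup `P_s f (x) = ∫ p_s(x,y) f(y) dy` on nonnegative functions on `ℝ`. -/
noncomputable def heatP (s : ℝ) (f : ℝ → ℝ≥0∞) (x : ℝ) : ℝ≥0∞ := ∫⁻ y, hk s x y * f y

theorem measurable_hk : Measurable fun p : ℝ × ℝ × ℝ => hk p.1 p.2.1 p.2.2 := by
  unfold hk; fun_prop

@[fun_prop]
theorem Measurable.hk' {α : Type*} [MeasurableSpace α] {f g h : α → ℝ} (hf : Measurable f)
    (hg : Measurable g) (hh : Measurable h) : Measurable fun a => hk (f a) (g a) (h a) :=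
  measurable_hk.comp (hf.prodMk (hg.prodMk hh))

theorem hk_symm (s x y : ℝ) : hk s x y = hk s y x := by
  unfold hk; congr 4; ring

theorem lintegral_hk {s : ℝ} (hs : 0 < s) (x : ℝ) : ∫⁻ y, hk s x y = 1 := by
  have hv : (⟨s, hs.le⟩ : NNReal) ≠ 0 := by
    intro h; exact hs.ne' (congrArg NNReal.toReal h)
  rw [← ProbabilityTheory.lintegral_gaussianPDF_eq_one x hv]
  refine lintegral_congr fun y => ?_
  rw [hk_symm]; rfl

/-- Completing the square: the product of two Gaussian densities in the middle variable is the
Chapman-Kolmogorov density times a Gaussian density. -/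
theorem hk_mul_hk {s t : ℝ} (hs : 0 < s) (ht : 0 < t) (x y z : ℝ) :
    hk s x y * hk t y z =
      hk (s + t) x z * hk (s * t / (s + t)) ((t * x + s * z) / (s + t)) y := by
  unfold hk
  have hst : 0 < s + t := by positivity
  rw [← ENNReal.ofReal_mul (by positivity), ← ENNReal.ofReal_mul (by positivity)]
  congr 1
  have e1 : √(2 * Real.pi * s) * √(2 * Real.pi * t) =
      √(2 * Real.pi * (s + t)) * √(2 * Real.pi * (s * t / (s + t))) := by
    rw [← Real.sqrt_mul (by positivity), ← Real.sqrt_mul (by positivity)]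
    congr 1; field_simp
  rw [mul_mul_mul_comm, ← mul_inv, ← Real.exp_add, mul_mul_mul_comm, ← mul_inv, ← Real.exp_add, e1]
  congr 2
  field_simp
  ring

theorem heatP_mono {s : ℝ} {f g : ℝ → ℝ≥0∞} (h : ∀ y, f y ≤ g y) (x : ℝ) :
    heatP s f x ≤ heatP s g x :=
  lintegral_mono fun y => by dsimp; gcongr; exact h y

theorem heatP_const {s : ℝ} (hs : 0 < s) (c : ℝ≥0∞) (x : ℝ) : heatP s (fun _ => c) x = c := by
  unfold heatP
  rw [lintegral_mul_const _ (by fun_prop), lintegral_hk hs, one_mul]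

/-- The semigroup property. -/
theorem heatP_heatP {s t : ℝ} (hs : 0 < s) (ht : 0 < t) {f : ℝ → ℝ≥0∞} (hf : Measurable f)
    (x : ℝ) : heatP s (heatP t f) x = heatP (s + t) f x := by
  unfold heatP
  simp_rw [← lintegral_const_mul' _ _ (show hk s x _ ≠ ⊤ from ENNReal.ofReal_ne_top)]
  rw [lintegral_lintegral_swap (by fun_prop)]
  refine lintegral_congr fun z => ?_
  simp_rw [← mul_assoc, hk_mul_hk hs ht x _ z]
  rw [lintegral_mul_const _ (by fun_prop), lintegral_const_mul _ (by fun_prop),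
    lintegral_hk (by positivity), mul_one]

/-- The heat flow preserves mass. -/
theorem lintegral_heatP {s : ℝ} (hs : 0 < s) {f : ℝ → ℝ≥0∞} (hf : Measurable f) :
    ∫⁻ x, heatP s f x = ∫⁻ x, f x := by
  unfold heatP
  rw [lintegral_lintegral_swap (by fun_prop)]
  refine lintegral_congr fun y => ?_
  simp_rw [hk_symm s _ y]
  rw [lintegral_mul_const _ (by fun_prop), lintegral_hk hs, one_mul]

theorem two_mul_mul_le (a b : ℝ≥0∞) : 2 * a * b ≤ a ^ 2 + b ^ 2 := by
  rcases eq_or_ne a ⊤ with rfl | ha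
  · simp
  rcases eq_or_ne b ⊤ with rfl | hb
  · simp
  lift a to NNReal using ha
  lift b to NNReal using hb
  norm_cast
  exact two_mul_le_add_sq a b

/-- Jensen's inequality for `P_s` and the square, from `2cf ≤ f² + c²` with `c = P_s f (x)`. -/
theorem sq_heatP_le {s : ℝ} (hs : 0 < s) {f : ℝ → ℝ≥0∞} (hf : Measurable f) {x : ℝ}
    (hfin : heatP s f x ≠ ⊤) : heatP s f x ^ 2 ≤ heatP s (fun y => f y ^ 2) x := by
  set c := heatP s f x with hc
  have key : 2 * c * c ≤ heatP s (fun y => f y ^ 2) x + c ^ 2 := by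
    calc 2 * c * c = heatP s (fun y => 2 * c * f y) x := by
          simp only [heatP, mul_left_comm _ (2 * c)]
          rw [lintegral_const_mul _ (by fun_prop)]
          rfl
      _ ≤ heatP s (fun y => f y ^ 2 + c ^ 2) x :=
          heatP_mono (fun y => (two_mul_mul_le c (f y)).trans_eq (add_comm _ _)) x
      _ = _ := by
          nth_rw 2 [← heatP_const hs (c ^ 2) x]
          simp only [heatP, mul_add]
          rw [lintegral_add_left (by fun_prop)]
  have h2 : 2 * c * c = c ^ 2 + c ^ 2 := by ring
  rw [h2] at key
  exact (ENNReal.add_le_add_iff_right (by finiteness)).1 key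

/-- Exponentials are eigenfunctions: `P_s` multiplies `e^{ly}` by `e^{l²s/2}`. -/
theorem heatP_exp {s : ℝ} (hs : 0 < s) (c : ℝ≥0∞) (l b x : ℝ) :
    heatP s (fun y => c * ENNReal.ofReal (Real.exp (l * y + b))) x =
      c * ENNReal.ofReal (Real.exp (l * x + b + l ^ 2 * s / 2)) := by
  have : ∀ y, hk s x y * (c * ENNReal.ofReal (Real.exp (l * y + b))) =
      c * ENNReal.ofReal (Real.exp (l * x + b + l ^ 2 * s / 2)) * hk s (x + l * s) y := by
    intro y
    rw [mul_left_comm, mul_assoc]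
    congr 1
    unfold hk
    rw [← ENNReal.ofReal_mul (by positivity), ← ENNReal.ofReal_mul (by positivity), mul_assoc,
      mul_left_comm (Real.exp _), ← Real.exp_add, ← Real.exp_add]
    congr 3
    field_simp
    ring
  simp only [heatP, this]
  rw [lintegral_const_mul _ (by fun_prop), lintegral_hk hs, mul_one]

/-! ### Integral forms of two differential inequalities -/

/-- Integral form of: if `F' ≥ F²` on `(0,t)` and `F(t) ≤ n`, then `F(0) ≤ n / (1 + n t)`.
Here `F(s) = a + ∫₀ˢ q` is only absolutely continuous. Comparing with the solution
`n / (1 + n (t - s))` of the equality case, the weight `(1 + n (t - s))²` is the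
integrating factor of the linearised inequality. -/
theorem integral_rate_bounds {q : ℝ → ℝ} {a t n : ℝ} (ht : 0 < t) (hn : 0 ≤ n)
    (hq : IntervalIntegrable q volume 0 t)
    (h1 : ∀ s ∈ Ioo 0 t, (a + ∫ σ in (0 : ℝ)..s, q σ) ^ 2 ≤ q s)
    (h2 : a + ∫ σ in (0 : ℝ)..t, q σ ≤ n) :
    a * (1 + n * t) ≤ n := by
  set F : ℝ → ℝ := fun s => a + ∫ σ in (0 : ℝ)..s, q σ with hF
  set w : ℝ → ℝ := fun s => (1 + n * (t - s)) ^ 2 with hw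
  have hac : AbsolutelyContinuousOnInterval F 0 t := by
    have h := hq.absolutelyContinuousOnInterval_intervalIntegral (c := 0) (by simp)
    have hc : AbsolutelyContinuousOnInterval (fun _ : ℝ => a) 0 t :=
      (ContDiffOn.absolutelyContinuousOnInterval (contDiff_const.contDiffOn))
    exact hc.add h
  have hwac : AbsolutelyContinuousOnInterval w 0 t :=
    ContDiffOn.absolutelyContinuousOnInterval (ContDiff.contDiffOn (by fun_prop))
  have hG := hwac.fun_mul hac
  have hint := hG.integral_deriv_eq_sub
  have hmono : ∫ s in (0 : ℝ)..t, (-n ^ 2) ≤ ∫ s in (0 : ℝ)..t, deriv (fun x => w x * F x) s := by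
    apply intervalIntegral.integral_mono_ae_restrict ht.le (by simp) hG.intervalIntegrable_deriv
    rw [EventuallyLE, ae_restrict_iff' measurableSet_Icc]
    have hne0 : ∀ᵐ s : ℝ, s ≠ 0 := by simp [ae_iff, measure_singleton]
    have hnet : ∀ᵐ s : ℝ, s ≠ t := by simp [ae_iff, measure_singleton]
    filter_upwards [hq.ae_hasDerivAt_integral, hne0, hnet] with s hs h0 h0' hsI
    have hsU : s ∈ uIcc 0 t := by rwa [uIcc_of_le ht.le]
    have hd := (hs hsU 0 (by simp)).const_add a
    have hwd : HasDerivAt w (2 * (1 + n * (t - s)) * (-n)) s := by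
      have : HasDerivAt (fun s => 1 + n * (t - s)) (n * (-1)) s :=
        (((hasDerivAt_id s).const_sub t).const_mul n).const_add 1
      exact (this.pow 2).congr_deriv (by norm_num)
    have hpd := (hwd.mul hd).deriv
    have : s ∈ Ioo 0 t := ⟨lt_of_le_of_ne hsI.1 (Ne.symm h0), lt_of_le_of_ne hsI.2 h0'⟩
    have hb := h1 s this
    change _ ≤ deriv (w * F) s
    rw [hpd]
    change -n ^ 2 ≤ 2 * (1 + n * (t - s)) * (-n) * F s + (1 + n * (t - s)) ^ 2 * q s
    have hb' : (1 + n * (t - s)) ^ 2 * F s ^ 2 ≤ (1 + n * (t - s)) ^ 2 * q s := by gcongr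
    nlinarith [sq_nonneg ((1 + n * (t - s)) * F s - n)]
  rw [hint] at hmono
  simp only [intervalIntegral.integral_const, smul_eq_mul, hw, hF, sub_self, mul_zero, add_zero,
    one_pow, one_mul, sub_zero, intervalIntegral.integral_same] at hmono
  have hpos : 0 < 1 + n * t := by positivity
  have : (1 + n * t) * (a * (1 + n * t)) ≤ (1 + n * t) * n := by nlinarith
  exact le_of_mul_le_mul_left this hpos

/-- Integral form of: if `F' ≤ F / (1 + t - s)` on `(0,t)`, then `F(t) ≤ (1 + t) F(0)`. -/
theorem integral_rate_bounds' {q : ℝ → ℝ} {a t : ℝ} (ht : 0 < t)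
    (hq : IntervalIntegrable q volume 0 t)
    (h1 : ∀ s ∈ Ioo 0 t, (1 + (t - s)) * q s ≤ a + ∫ σ in (0 : ℝ)..s, q σ) :
    a + ∫ σ in (0 : ℝ)..t, q σ ≤ a * (1 + t) := by
  set F : ℝ → ℝ := fun s => a + ∫ σ in (0 : ℝ)..s, q σ with hF
  set w : ℝ → ℝ := fun s => 1 + (t - s) with hw
  have hac : AbsolutelyContinuousOnInterval F 0 t := by
    have h := hq.absolutelyContinuousOnInterval_intervalIntegral (c := 0) (by simp)
    have hc : AbsolutelyContinuousOnInterval (fun _ : ℝ => a) 0 t :=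
      (ContDiffOn.absolutelyContinuousOnInterval (contDiff_const.contDiffOn))
    exact hc.add h
  have hwac : AbsolutelyContinuousOnInterval w 0 t :=
    ContDiffOn.absolutelyContinuousOnInterval (ContDiff.contDiffOn (by fun_prop))
  have hG := hwac.fun_mul hac
  have hint := hG.integral_deriv_eq_sub
  have hmono : ∫ s in (0 : ℝ)..t, deriv (fun x => w x * F x) s ≤ ∫ s in (0 : ℝ)..t, 0 := by
    apply intervalIntegral.integral_mono_ae_restrict ht.le hG.intervalIntegrable_deriv (by simp)
    rw [EventuallyLE, ae_restrict_iff' measurableSet_Icc]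
    have hne0 : ∀ᵐ s : ℝ, s ≠ 0 := by simp [ae_iff, measure_singleton]
    have hnet : ∀ᵐ s : ℝ, s ≠ t := by simp [ae_iff, measure_singleton]
    filter_upwards [hq.ae_hasDerivAt_integral, hne0, hnet] with s hs h0 h0' hsI
    have hsU : s ∈ uIcc 0 t := by rwa [uIcc_of_le ht.le]
    have hd := (hs hsU 0 (by simp)).const_add a
    have hwd : HasDerivAt w (-1) s := ((hasDerivAt_id s).const_sub t).const_add 1
    have hpd := (hwd.mul hd).deriv
    have : s ∈ Ioo 0 t := ⟨lt_of_le_of_ne hsI.1 (Ne.symm h0), lt_of_le_of_ne hsI.2 h0'⟩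
    have hb := h1 s this
    change deriv (w * F) s ≤ _
    rw [hpd]
    change -1 * F s + (1 + (t - s)) * q s ≤ 0
    linarith
  rw [hint] at hmono
  simp only [intervalIntegral.integral_zero, hw, hF, sub_self, add_zero,
    one_mul, sub_zero, intervalIntegral.integral_same] at hmono
  linarith

/-! ### Mild solutions on the line -/

/-- `U` is a mild solution on `ℝ` with measurable data `Φ ≤ n`. Functions take values in `[0,∞]`;
the bound `n` is a real number, so that every quantity in the equation is finite. -/
structure IsMild (n : ℝ) (Φ : ℝ → ℝ≥0∞) (U : ℝ → ℝ → ℝ≥0∞) : Prop where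
  nonneg : 0 ≤ n
  meas_data : Measurable Φ
  data_le : ∀ x, Φ x ≤ ENNReal.ofReal n
  meas : Measurable (Function.uncurry U)
  eq : ∀ t x, 0 < t → U t x + ∫⁻ s in Ioo 0 t, heatP s (fun y => U (t - s) y ^ 2) x = heatP t Φ x

namespace IsMild

variable {n : ℝ} {Φ : ℝ → ℝ≥0∞} {U : ℝ → ℝ → ℝ≥0∞}

theorem meas_comp (h : IsMild n Φ U) {α : Type*} [MeasurableSpace α] {f g : α → ℝ}
    (hf : Measurable f) (hg : Measurable g) : Measurable fun a => U (f a) (g a) :=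
  h.meas.comp (hf.prodMk hg)

theorem heatP_data_le (h : IsMild n Φ U) {t : ℝ} (ht : 0 < t) (x : ℝ) :
    heatP t Φ x ≤ ENNReal.ofReal n :=
  (heatP_mono h.data_le x).trans_eq (heatP_const ht _ x)

theorem le_heatP (h : IsMild n Φ U) {t : ℝ} (ht : 0 < t) (x : ℝ) : U t x ≤ heatP t Φ x :=
  le_self_add.trans_eq (h.eq t x ht)

theorem le_bound (h : IsMild n Φ U) {t : ℝ} (ht : 0 < t) (x : ℝ) : U t x ≤ ENNReal.ofReal n :=
  (h.le_heatP ht x).trans (h.heatP_data_le ht x)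

theorem meas_rate (h : IsMild n Φ U) (t x : ℝ) :
    Measurable fun σ => heatP σ (fun y => U (t - σ) y ^ 2) x := by
  unfold heatP
  refine Measurable.lintegral_prod_right'
    (f := fun p : ℝ × ℝ => hk p.1 x p.2 * U (t - p.1) p.2 ^ 2) ?_
  have := h.meas_comp (f := fun p : ℝ × ℝ => t - p.1) (g := fun p => p.2)
    (by fun_prop) (by fun_prop)
  exact Measurable.mul (by fun_prop) (this.pow_const 2)

/-- Duhamel's formula between the times `t - s` and `t`: apply `P_s` to the equation at time
`t - s`, use the semigroup property, and subtract from the equation at time `t`. -/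
theorem restart (h : IsMild n Φ U) {s t : ℝ} (hs : 0 < s) (hst : s < t) (x : ℝ) :
    heatP s (U (t - s)) x =
      U t x + ∫⁻ σ in Ioo 0 s, heatP σ (fun y => U (t - σ) y ^ 2) x := by
  set Q : ℝ → ℝ≥0∞ := fun σ => heatP σ (fun y => U (t - σ) y ^ 2) x with hQ
  have hQm : Measurable Q := h.meas_rate t x
  have hts : 0 < t - s := sub_pos.2 hst
  have hUm : ∀ r, Measurable (U r) := fun r => h.meas_comp measurable_const measurable_id
  have hI : Measurable fun p : ℝ × ℝ => heatP p.2 (fun y => U (t - s - p.2) y ^ 2) p.1 := by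
    unfold heatP
    refine Measurable.lintegral_prod_right'
      (f := fun p : (ℝ × ℝ) × ℝ => hk p.1.2 p.1.1 p.2 * U (t - s - p.1.2) p.2 ^ 2) ?_
    have := h.meas_comp (f := fun p : (ℝ × ℝ) × ℝ => t - s - p.1.2) (g := fun p => p.2)
      (by fun_prop) (by fun_prop)
    exact Measurable.mul (by fun_prop) (this.pow_const 2)
  have hA : heatP s (U (t - s)) x + heatP s (fun z => ∫⁻ σ in Ioo 0 (t - s),
      heatP σ (fun y => U (t - s - σ) y ^ 2) z) x = heatP t Φ x := by
    have h1 : heatP s (heatP (t - s) Φ) x = heatP t Φ x := by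
      rw [heatP_heatP hs hts h.meas_data]; congr 1; ring
    rw [← h1, show heatP (t - s) Φ = fun z => U (t - s) z + ∫⁻ σ in Ioo 0 (t - s),
      heatP σ (fun y => U (t - s - σ) y ^ 2) z from funext fun z => (h.eq (t - s) z hts).symm]
    simp only [heatP, mul_add]
    rw [lintegral_add_left (by have := hUm (t - s); fun_prop)]
  have hB : heatP s (fun z => ∫⁻ σ in Ioo 0 (t - s),
      heatP σ (fun y => U (t - s - σ) y ^ 2) z) x = ∫⁻ σ in Ioo 0 (t - s), Q (s + σ) := by
    have : heatP s (fun z => ∫⁻ σ in Ioo 0 (t - s), heatP σ (fun y => U (t - s - σ) y ^ 2) z) x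
        = ∫⁻ z, ∫⁻ σ in Ioo 0 (t - s), hk s x z * heatP σ (fun y => U (t - s - σ) y ^ 2) z :=
      lintegral_congr fun z => (lintegral_const_mul' _ _ ENNReal.ofReal_ne_top).symm
    rw [this, lintegral_lintegral_swap]
    · refine setLIntegral_congr_fun measurableSet_Ioo fun σ hσ => ?_
      change heatP s (heatP σ (fun y => U (t - s - σ) y ^ 2)) x = _
      rw [heatP_heatP hs hσ.1 (by have := hUm (t - s - σ); fun_prop)]
      simp only [hQ, sub_sub]
    · apply Measurable.aemeasurable
      change Measurable fun p : ℝ × ℝ => hk s x p.1 * heatP p.2 (fun y => U (t - s - p.2) y ^ 2) p.1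
      fun_prop
  have hC : ∫⁻ σ in Ioo 0 (t - s), Q (s + σ) = ∫⁻ τ in Ioo s t, Q τ := by
    rw [← lintegral_indicator measurableSet_Ioo, ← lintegral_indicator measurableSet_Ioo,
      ← lintegral_add_left_eq_self ((Ioo s t).indicator Q) s]
    refine lintegral_congr fun σ => ?_
    simp only [indicator, mem_Ioo]
    congr 1
    simp only [eq_iff_iff]
    constructor <;> rintro ⟨h1, h2⟩ <;> constructor <;> linarith
  have hD : ∫⁻ σ in Ioo 0 t, Q σ = (∫⁻ σ in Ioo 0 s, Q σ) + ∫⁻ σ in Ioo s t, Q σ := by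
    rw [restrict_Ioo_eq_restrict_Ioc, restrict_Ioo_eq_restrict_Ioc, restrict_Ioo_eq_restrict_Ioc,
      ← Ioc_union_Ioc_eq_Ioc hs.le hst.le,
      lintegral_union measurableSet_Ioc (Ioc_disjoint_Ioc_of_le le_rfl)]
  have hE := h.eq t x (hs.trans hst)
  have hfin : ∫⁻ τ in Ioo s t, Q τ ≠ ⊤ := by
    refine ne_top_of_le_ne_top (ENNReal.ofReal_ne_top (r := n)) ?_
    refine le_trans ?_ (h.heatP_data_le (hs.trans hst) x)
    rw [← hE]
    change _ ≤ U t x + ∫⁻ σ in Ioo 0 t, Q σ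
    rw [hD, ← add_assoc]
    exact le_add_self
  rw [hB, hC] at hA
  rw [← hA] at hE
  change U t x + ∫⁻ σ in Ioo 0 t, Q σ = _ at hE
  rw [hD, ← add_assoc] at hE
  exact ((ENNReal.add_left_inj hfin).1 hE).symm

theorem rate_le (h : IsMild n Φ U) {s t : ℝ} (hs : 0 < s) (hst : s < t) (x : ℝ) :
    heatP s (fun y => U (t - s) y ^ 2) x ≤ ENNReal.ofReal n ^ 2 :=
  (heatP_mono (fun y => by gcongr; exact h.le_bound (sub_pos.2 hst) y) x).trans_eq
    (heatP_const hs _ x)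

theorem heatP_le (h : IsMild n Φ U) {s t : ℝ} (hs : 0 < s) (hst : s < t) (x : ℝ) :
    heatP s (U (t - s)) x ≤ ENNReal.ofReal n :=
  (heatP_mono (fun y => h.le_bound (sub_pos.2 hst) y) x).trans_eq (heatP_const hs _ x)

/-- Real-valued form of `restart`: `s ↦ P_s U(t-s) (x)` is an integral, with integrable
integrand `σ ↦ P_σ (U(t-σ)²)(x)`, starting at `U(t,x)` and ending at `P_t Φ (x)`. -/
theorem real_facts (h : IsMild n Φ U) {t : ℝ} (ht : 0 < t) (x : ℝ) :
    let q : ℝ → ℝ := fun σ => (heatP σ (fun y => U (t - σ) y ^ 2) x).toReal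
    IntervalIntegrable q volume 0 t ∧
    (∀ s ∈ Ioo 0 t, (U t x).toReal + ∫ σ in (0 : ℝ)..s, q σ = (heatP s (U (t - s)) x).toReal) ∧
    (U t x).toReal + ∫ σ in (0 : ℝ)..t, q σ = (heatP t Φ x).toReal := by
  intro q
  have hqm : Measurable q := (h.meas_rate t x).ennreal_toReal
  have hlt : ∀ s ∈ Ioc 0 t, ∀ σ ∈ Ioo 0 s, heatP σ (fun y => U (t - σ) y ^ 2) x < ⊤ :=
    fun s hs σ hσ => (h.rate_le hσ.1 (hσ.2.trans_le hs.2) x).trans_lt (by finiteness)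
  have hint : ∀ s ∈ Ioc 0 t, ∫ σ in (0 : ℝ)..s, q σ =
      (∫⁻ σ in Ioo 0 s, heatP σ (fun y => U (t - σ) y ^ 2) x).toReal := by
    intro s hs
    rw [intervalIntegral.integral_of_le hs.1.le, ← restrict_Ioo_eq_restrict_Ioc]
    refine integral_toReal (h.meas_rate t x).aemeasurable ?_
    exact (ae_restrict_iff' measurableSet_Ioo).2 (ae_of_all _ (hlt s hs))
  have hUt : U t x ≠ ⊤ := ((h.le_bound ht x).trans_lt (by finiteness)).ne
  refine ⟨?_, fun s hs => ?_, ?_⟩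
  · rw [intervalIntegrable_iff_integrableOn_Ioo_of_le ht.le]
    refine Measure.integrableOn_of_bounded (M := n ^ 2) (by simp) hqm.aestronglyMeasurable ?_
    refine (ae_restrict_iff' measurableSet_Ioo).2 (ae_of_all _ fun σ hσ => ?_)
    rw [Real.norm_of_nonneg ENNReal.toReal_nonneg]
    refine ENNReal.toReal_le_of_le_ofReal (by positivity) ?_
    rw [ENNReal.ofReal_pow h.nonneg]
    exact h.rate_le hσ.1 hσ.2 x
  · have hr := h.restart hs.1 hs.2 x
    have hne : heatP s (U (t - s)) x ≠ ⊤ :=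
      ((h.heatP_le hs.1 hs.2 x).trans_lt (by finiteness)).ne
    rw [hint s ⟨hs.1, hs.2.le⟩, ← ENNReal.toReal_add hUt, ← hr]
    rw [hr] at hne
    exact (ENNReal.add_ne_top.1 hne).2
  · have hr := h.eq t x ht
    have hne : heatP t Φ x ≠ ⊤ := ((h.heatP_data_le ht x).trans_lt (by finiteness)).ne
    rw [hint t ⟨ht, le_rfl⟩, ← ENNReal.toReal_add hUt, hr]
    rw [← hr] at hne
    exact (ENNReal.add_ne_top.1 hne).2

/-- `U(t,x) ≤ n / (1 + n t)`, the value of the spatially constant solution with data `n`. -/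
theorem toReal_mul_le (h : IsMild n Φ U) {t : ℝ} (ht : 0 < t) (x : ℝ) :
    (U t x).toReal * (1 + n * t) ≤ n := by
  obtain ⟨hq, h1, h2⟩ := h.real_facts ht x
  refine integral_rate_bounds ht h.nonneg hq (fun s hs => ?_) ?_
  · have hne : heatP s (U (t - s)) x ≠ ⊤ :=
      ((h.heatP_le hs.1 hs.2 x).trans_lt (by finiteness)).ne
    rw [h1 s hs, ← ENNReal.toReal_pow]
    refine ENNReal.toReal_mono ((h.rate_le hs.1 hs.2 x).trans_lt (by finiteness)).ne ?_
    exact sq_heatP_le hs.1 (h.meas_comp measurable_const measurable_id) hne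
  · rw [h2]
    exact ENNReal.toReal_le_of_le_ofReal h.nonneg (h.heatP_data_le ht x)

theorem le_inv (h : IsMild n Φ U) {t : ℝ} (ht : 0 < t) (x : ℝ) :
    U t x ≤ ENNReal.ofReal t⁻¹ := by
  have hne : U t x ≠ ⊤ := ((h.le_bound ht x).trans_lt (by finiteness)).ne
  rw [← ENNReal.ofReal_toReal hne]
  refine ENNReal.ofReal_le_ofReal ?_
  have h1 := h.toReal_mul_le ht x
  have hn := h.nonneg
  have hU : 0 ≤ (U t x).toReal := ENNReal.toReal_nonneg
  rw [← one_div, le_div_iff₀ ht]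
  rcases hn.eq_or_lt with h0 | h0
  · subst h0; simp at h1; nlinarith
  · have : n * ((U t x).toReal * t) ≤ n * 1 := by nlinarith
    exact le_of_mul_le_mul_left this h0

/-- For data bounded by `1`, the nonlinearity costs at most the factor `1 + t` compared with the
linear heat flow. -/
theorem heatP_le_mul (h : IsMild 1 Φ U) {t : ℝ} (ht : 0 < t) (x : ℝ) :
    (heatP t Φ x).toReal ≤ (U t x).toReal * (1 + t) := by
  obtain ⟨hq, h1, h2⟩ := h.real_facts ht x
  rw [← h2]
  refine integral_rate_bounds' ht hq (fun s hs => ?_)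
  have hts : 0 < t - s := sub_pos.2 hs.2
  have hne : heatP s (U (t - s)) x ≠ ⊤ :=
    ((h.heatP_le hs.1 hs.2 x).trans_lt (by finiteness)).ne
  have hUm : Measurable (U (t - s)) := h.meas_comp measurable_const measurable_id
  rw [h1 s hs, ← ENNReal.toReal_ofReal (show 0 ≤ 1 + (t - s) by linarith), ← ENNReal.toReal_mul]
  refine ENNReal.toReal_mono hne ?_
  unfold heatP
  rw [← lintegral_const_mul _ (by fun_prop)]
  refine lintegral_mono fun y => ?_
  rw [mul_left_comm]
  gcongr
  have hy := h.toReal_mul_le hts y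
  have hyne : U (t - s) y ≠ ⊤ := ((h.le_bound hts y).trans_lt (by finiteness)).ne
  calc ENNReal.ofReal (1 + (t - s)) * U (t - s) y ^ 2
      = (ENNReal.ofReal (1 + (t - s)) * U (t - s) y) * U (t - s) y := by ring
    _ ≤ 1 * U (t - s) y := by
        gcongr
        rw [← ENNReal.ofReal_toReal hyne, ← ENNReal.ofReal_mul (by linarith)]
        exact ENNReal.ofReal_le_one.2 (by linarith)
    _ = _ := one_mul _

/-- Exponential decay at scale `√t` outside the half-line `e x ≤ R` (`e = ±1`) carrying the data,
with constants that do not depend on `n`. The bound is established for `t ≤ 1/n` and then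
propagated by doubling `t`. -/
theorem exp_bound (h : IsMild n Φ U) {e R : ℝ} (he : e ^ 2 = 1)
    (hΦ : ∀ x, R < e * x → Φ x = 0) {t : ℝ} (ht : 0 < t) (x : ℝ) :
    U t x ≤ ENNReal.ofReal t⁻¹ * ENNReal.ofReal (Real.exp (3 - (e * x - R) / √t)) := by
  have base : ∀ t, 0 < t → n * t ≤ 1 → ∀ x,
      U t x ≤ ENNReal.ofReal t⁻¹ * ENNReal.ofReal (Real.exp (3 - (e * x - R) / √t)) := by
    intro t ht hnt x
    have hsq : 0 < √t := Real.sqrt_pos.2 ht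
    calc U t x ≤ heatP t Φ x := h.le_heatP ht x
      _ ≤ heatP t (fun y => ENNReal.ofReal n *
            ENNReal.ofReal (Real.exp (-e / √t * y + R / √t))) x := by
          refine heatP_mono (fun y => ?_) x
          by_cases hy : R < e * y
          · rw [hΦ y hy]; exact zero_le
          · refine (h.data_le y).trans (le_mul_of_one_le_right' ?_)
            rw [ENNReal.one_le_ofReal]
            apply Real.one_le_exp
            have : -e / √t * y + R / √t = (R - e * y) / √t := by ring
            rw [this]
            exact div_nonneg (by linarith) hsq.le
      _ = ENNReal.ofReal n * ENNReal.ofReal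
            (Real.exp (-e / √t * x + R / √t + (-e / √t) ^ 2 * t / 2)) := heatP_exp ht _ _ _ _
      _ ≤ _ := by
          gcongr
          · rw [← one_div, le_div_iff₀ ht]; exact hnt
          · have : (-e / √t) ^ 2 * t = 1 := by
              rw [div_pow, Real.sq_sqrt ht.le, neg_sq, he]; field_simp
            rw [this]
            have : -e / √t * x + R / √t = -((e * x - R) / √t) := by ring
            rw [this]; linarith
  have main : ∀ k : ℕ, ∀ t, 0 < t → n * t ≤ 2 ^ k → ∀ x,
      U t x ≤ ENNReal.ofReal t⁻¹ * ENNReal.ofReal (Real.exp (3 - (e * x - R) / √t)) := by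
    intro k
    induction k with
    | zero => intro t ht hnt; exact base t ht (by simpa using hnt)
    | succ k ih =>
      intro t ht hnt x
      have ht2 : 0 < t / 2 := by positivity
      have hsq : 0 < √t := Real.sqrt_pos.2 ht
      have ih' := ih (t / 2) ht2 (by rw [pow_succ] at hnt; linarith)
      set z := (e * x - R) / √t with hz
      by_cases hz3 : z ≤ 3
      · refine (h.le_inv ht x).trans (le_mul_of_one_le_right' ?_)
        rw [ENNReal.one_le_ofReal]
        exact Real.one_le_exp (by linarith)
      -- One step costs `log 2 + 1/2` in the exponent, while the slope gains a factor `√2`: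
      -- for `z > 3` this is enough, since `3 (√2 - 1) > log 2 + 1/2`.
      · push Not at hz3
        have hs2 : √(t / 2) = √t / √2 := Real.sqrt_div ht.le 2
        have hr := h.restart ht2 (half_lt_self ht) x
        have ht3 : t - t / 2 = t / 2 := by ring
        rw [ht3] at hr
        calc U t x ≤ heatP (t / 2) (U (t / 2)) x := by rw [hr]; exact le_self_add
          _ ≤ heatP (t / 2) (fun y => ENNReal.ofReal (t / 2)⁻¹ *
                ENNReal.ofReal (Real.exp (-e / √(t / 2) * y + (3 + R / √(t / 2))))) x := by
              refine heatP_mono (fun y => (ih' y).trans_eq ?_) x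
              congr 3; ring
          _ = ENNReal.ofReal (t / 2)⁻¹ * ENNReal.ofReal (Real.exp (-e / √(t / 2) * x +
                (3 + R / √(t / 2)) + (-e / √(t / 2)) ^ 2 * (t / 2) / 2)) := heatP_exp ht2 _ _ _ _
          _ ≤ _ := by
              have h1 : (-e / √(t / 2)) ^ 2 * (t / 2) = 1 := by
                rw [div_pow, Real.sq_sqrt ht2.le, neg_sq, he]; field_simp
              have h2 : -e / √(t / 2) * x + (3 + R / √(t / 2)) = 3 - √2 * z := by
                rw [hs2, hz]; field_simp; ring
              rw [h1, h2, ← ENNReal.ofReal_mul (by positivity), ← ENNReal.ofReal_mul (by positivity)]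
              refine ENNReal.ofReal_le_ofReal ?_
              have h3 : (t / 2)⁻¹ = t⁻¹ * Real.exp (Real.log 2) := by
                rw [Real.exp_log two_pos]; field_simp
              rw [h3, mul_assoc, ← Real.exp_add]
              gcongr
              have hl : Real.log 2 < 0.6931471808 := Real.log_two_lt_d9
              have hs : (1.414 : ℝ) ≤ √2 := Real.le_sqrt_of_sq_le (by norm_num)
              nlinarith
  obtain ⟨k, hk⟩ := pow_unbounded_of_one_lt (n * t) (one_lt_two)
  exact main k t ht hk.le x

end IsMild

/-! ### Transfer between `EuclideanSpace ℝ (Fin 1)` and `ℝ` -/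

/-- The identification of `ℝ` with the Euclidean space of dimension `1`. -/
noncomputable def lineEquiv : ℝ ≃ᵐ EuclideanSpace ℝ (Fin 1) :=
  (MeasurableEquiv.funUnique (Fin 1) ℝ).symm.trans (MeasurableEquiv.toLp 2 (Fin 1 → ℝ))

theorem measurePreserving_lineEquiv : MeasurePreserving lineEquiv :=
  (PiLp.volume_preserving_toLp (Fin 1)).comp ((volume_preserving_funUnique (Fin 1) ℝ).symm _)

theorem lineEquiv_apply (x : ℝ) : lineEquiv x 0 = x := rfl

theorem norm_lineEquiv (x : ℝ) : ‖lineEquiv x‖ = |x| := by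
  rw [EuclideanSpace.norm_eq]
  simp [lineEquiv_apply, Real.sqrt_sq_eq_abs]

theorem norm_lineEquiv_sub (x y : ℝ) : ‖lineEquiv x - lineEquiv y‖ ^ 2 = (x - y) ^ 2 := by
  rw [EuclideanSpace.norm_eq, Real.sq_sqrt (by positivity)]
  simp [lineEquiv_apply]

theorem ofReal_heatKernel {s : ℝ} (hs : 0 < s) (x y : ℝ) :
    ENNReal.ofReal (heatKernel 1 s (lineEquiv x) (lineEquiv y)) = hk s x y := by
  unfold heatKernel hk
  rw [norm_lineEquiv_sub]
  congr 2
  rw [Real.sqrt_eq_rpow, ← Real.rpow_neg (by positivity)]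
  norm_num

theorem heatKernel_nonneg {s : ℝ} (hs : 0 < s) (x y : EuclideanSpace ℝ (Fin 1)) :
    0 ≤ heatKernel 1 s x y := by
  unfold heatKernel; positivity

/-- A mild solution with data `n · 1_{B(R)}` in dimension `1` becomes a mild solution on `ℝ` with
data `n · 1_{(-R,R)}`. -/
theorem IsMildSolution.isMild {R : ℝ} {n : ℝ} (hn : 0 ≤ n)
    {u : ℝ → EuclideanSpace ℝ (Fin 1) → ℝ}
    (hu : IsMildSolution 1 ((ball (0 : EuclideanSpace ℝ (Fin 1)) R).indicator fun _ => n) u) :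
    IsMild n ((Ioo (-R) R).indicator fun _ => ENNReal.ofReal n)
      (fun t x => ENNReal.ofReal (u t (lineEquiv x))) := by
  obtain ⟨hm, h0, heq⟩ := hu
  refine ⟨hn, measurable_const.indicator measurableSet_Ioo, fun x => ?_, ?_, fun t x ht => ?_⟩
  · exact indicator_le_self' (fun _ _ => zero_le) x
  · have : Measurable fun p : ℝ × ℝ => Function.uncurry u (p.1, lineEquiv p.2) :=
      hm.comp (measurable_fst.prodMk (lineEquiv.measurable.comp measurable_snd))
    exact this.ennreal_ofReal
  · have h := heq t (lineEquiv x) ht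
    have hE : ∀ f : EuclideanSpace ℝ (Fin 1) → ℝ≥0∞, ∫⁻ y, f y = ∫⁻ y, f (lineEquiv y) :=
      fun f => (measurePreserving_lineEquiv.lintegral_comp_emb
        lineEquiv.measurableEmbedding f).symm
    rw [hE] at h
    have e1 : ∫⁻ s in Ioo (0 : ℝ) t, ∫⁻ y,
          ENNReal.ofReal (heatKernel 1 s (lineEquiv x) y * u (t - s) y ^ 2) =
        ∫⁻ s in Ioo 0 t, heatP s (fun y => ENNReal.ofReal (u (t - s) (lineEquiv y)) ^ 2) x := by
      refine setLIntegral_congr_fun measurableSet_Ioo fun s hs => ?_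
      simp only [hE, heatP]
      refine lintegral_congr fun y => ?_
      rw [ENNReal.ofReal_mul (heatKernel_nonneg hs.1 _ _), ofReal_heatKernel hs.1,
        ENNReal.ofReal_pow (h0 _ _)]
    rw [e1] at h
    rw [h]
    refine lintegral_congr fun y => ?_
    rw [ENNReal.ofReal_mul (heatKernel_nonneg ht _ _), ofReal_heatKernel ht]
    congr 1
    by_cases hy : |y| < R
    · rw [indicator_of_mem (by simpa [norm_lineEquiv] using hy),
        indicator_of_mem (by simpa [abs_lt] using hy)]
    · rw [indicator_of_notMem (by simpa [norm_lineEquiv] using hy),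
        indicator_of_notMem (by simpa only [mem_Ioo, ← abs_lt] using hy), ENNReal.ofReal_zero]

/-! ### The limits -/

/-- The even function equal to `1` on `[-A, A]` and decaying as `exp (-(|x| - A) / c)` outside. -/
noncomputable def envelope (c A x : ℝ) : ℝ :=
  (Icc (-A) A).indicator (fun _ => (1 : ℝ)) x + (Ioi A).indicator (fun y => Real.exp (-(y - A) / c)) x +
    (Iic (-A)).indicator (fun y => Real.exp ((y + A) / c)) x

theorem envelope_integral {c A : ℝ} (hc : 0 < c) (hA : 0 ≤ A) :
    Integrable (envelope c A) ∧ ∫ x, envelope c A x = 2 * A + 2 * c := by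
  have hcn : -c⁻¹ < 0 := by simpa using hc
  have hcp : 0 < c⁻¹ := by positivity
  have e1 : (fun y => Real.exp (-(y - A) / c)) =
      fun y => Real.exp (A / c) * Real.exp (-c⁻¹ * y) := by
    ext y; rw [← Real.exp_add]; congr 1; ring
  have e2 : (fun y => Real.exp ((y + A) / c)) =
      fun y => Real.exp (A / c) * Real.exp (c⁻¹ * y) := by
    ext y; rw [← Real.exp_add]; congr 1; ring
  have i0 : Integrable ((Icc (-A) A).indicator (fun _ => (1 : ℝ))) :=
    (integrable_indicator_iff measurableSet_Icc).2 (by simp)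
  have i1 : Integrable ((Ioi A).indicator (fun y => Real.exp (-(y - A) / c))) := by
    rw [integrable_indicator_iff measurableSet_Ioi, e1]
    exact (integrableOn_exp_mul_Ioi hcn A).const_mul _
  have i2 : Integrable ((Iic (-A)).indicator (fun y => Real.exp ((y + A) / c))) := by
    rw [integrable_indicator_iff measurableSet_Iic, e2]
    exact (integrableOn_exp_mul_Iic hcp (-A)).const_mul _
  refine ⟨(i0.add i1).add i2, ?_⟩
  refine (integral_add (i0.add i1) i2).trans ((congrArg (· + _) (integral_add i0 i1)).trans ?_)
  rw [integral_indicator measurableSet_Icc,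
    integral_indicator measurableSet_Ioi, integral_indicator measurableSet_Iic, e1, e2,
    integral_const_mul, integral_const_mul, integral_exp_mul_Ioi hcn, integral_exp_mul_Iic hcp]
  have h3 : Real.exp (A / c) * Real.exp (-c⁻¹ * A) = 1 := by
    rw [← Real.exp_add, ← Real.exp_zero]; congr 1; ring
  have h4 : Real.exp (A / c) * Real.exp (c⁻¹ * -A) = 1 := by
    rw [← Real.exp_add, ← Real.exp_zero]; congr 1; ring
  have h5 : ∫ x in Icc (-A) A, (1 : ℝ) = 2 * A := by
    simp [hA]; ring
  rw [h5, mul_div_assoc', mul_div_assoc', mul_neg, h3, h4]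
  field_simp
  ring

theorem le_envelope {c A K a x : ℝ} (hK : 0 ≤ K) (h0 : a ≤ K)
    (h1 : a ≤ K * Real.exp (-(x - A) / c)) (h2 : a ≤ K * Real.exp ((x + A) / c)) :
    a ≤ K * envelope c A x := by
  unfold envelope
  have p0 : 0 ≤ (Icc (-A) A).indicator (fun _ => (1 : ℝ)) x := indicator_nonneg (by simp) _
  have p1 : 0 ≤ (Ioi A).indicator (fun y => Real.exp (-(y - A) / c)) x :=
    indicator_nonneg (fun _ _ => by positivity) _
  have p2 : 0 ≤ (Iic (-A)).indicator (fun y => Real.exp ((y + A) / c)) x :=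
    indicator_nonneg (fun _ _ => by positivity) _
  by_cases hx1 : A < x
  · refine h1.trans (mul_le_mul_of_nonneg_left ?_ hK)
    rw [indicator_of_mem (show x ∈ Ioi A from hx1)]; linarith
  by_cases hx2 : x ≤ -A
  · refine h2.trans (mul_le_mul_of_nonneg_left ?_ hK)
    rw [indicator_of_mem (show x ∈ Iic (-A) from hx2)]; linarith
  · refine h0.trans (le_mul_of_one_le_right hK ?_)
    rw [indicator_of_mem (show x ∈ Icc (-A) A from ⟨by linarith, by linarith⟩)]; linarith

/-- Two-sided estimates at a fixed time `t`; both sides tend to `2r` as `t → ∞`. -/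
theorem integral_bounds {r t : ℝ} (hr : 0 < r) (ht : 0 < t)
    {u : ℕ → ℝ → EuclideanSpace ℝ (Fin 1) → ℝ}
    (hu : ∀ n : ℕ, 1 ≤ n → IsMildSolution 1
      ((ball (0 : EuclideanSpace ℝ (Fin 1)) (r * t)).indicator fun _ => (n : ℝ)) (u n)) :
    2 * r * (t / (1 + t)) ≤ ∫ x, ⨆ n : ℕ, u (n + 1) t x ∧
    ∫ x, (⨆ n : ℕ, u (n + 1) t x) ≤ 2 * r + 8 / √t ∧
    2 * r * (t / (1 + t)) ^ 2 ≤ ∫ x, (1 - Real.exp (-(⨆ n : ℕ, u (n + 1) t x))) ∧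
    ∫ x, (1 - Real.exp (-(⨆ n : ℕ, u (n + 1) t x))) ≤ 2 * r + 8 / √t := by
  have hE : ∀ f : EuclideanSpace ℝ (Fin 1) → ℝ, ∫ y, f y = ∫ y, f (lineEquiv y) :=
    fun f => (measurePreserving_lineEquiv.integral_comp lineEquiv.measurableEmbedding f).symm
  rw [hE, hE]
  set v : ℝ → ℝ := fun x => ⨆ n : ℕ, u (n + 1) t (lineEquiv x) with hv
  have hM : ∀ n : ℕ, IsMild ((n + 1 : ℕ) : ℝ)
      ((Ioo (-(r * t)) (r * t)).indicator fun _ => ENNReal.ofReal ((n + 1 : ℕ) : ℝ))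
      (fun t x => ENNReal.ofReal (u (n + 1) t (lineEquiv x))) :=
    fun n => (hu (n + 1) (by omega)).isMild (by positivity)
  have hu0 : ∀ n x, 0 ≤ u (n + 1) t (lineEquiv x) := fun n x => (hu (n + 1) (by omega)).2.1 _ _
  have hle : ∀ n x, u (n + 1) t (lineEquiv x) ≤ t⁻¹ := fun n x =>
    (ENNReal.ofReal_le_ofReal_iff (by positivity)).1 ((hM n).le_inv ht x)
  have hsq : 0 < √t := Real.sqrt_pos.2 ht
  have hexp : ∀ e : ℝ, e ^ 2 = 1 → |e| = 1 → ∀ n x, u (n + 1) t (lineEquiv x) ≤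
      t⁻¹ * Real.exp (3 - (e * x - r * t) / √t) := by
    intro e he he' n x
    refine (ENNReal.ofReal_le_ofReal_iff (by positivity)).1 ?_
    rw [ENNReal.ofReal_mul (by positivity)]
    refine (hM n).exp_bound he (fun y hy => indicator_of_notMem ?_ _) ht x
    rw [mem_Ioo, ← abs_lt, not_lt]
    calc r * t ≤ |e * y| := hy.le.trans (le_abs_self _)
      _ = |y| := by rw [abs_mul, he', one_mul]
  have hbdd : ∀ x, BddAbove (range fun n : ℕ => u (n + 1) t (lineEquiv x)) := fun x =>
    ⟨t⁻¹, by rintro _ ⟨n, rfl⟩; exact hle n x⟩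
  have hv1 : ∀ x, u 1 t (lineEquiv x) ≤ v x := fun x => le_ciSup (hbdd x) 0
  have hv0 : ∀ x, 0 ≤ v x := fun x => (hu0 0 x).trans (hv1 x)
  have hvle : ∀ x, v x ≤ t⁻¹ := fun x => ciSup_le fun n => hle n x
  set A : ℝ := r * t + 3 * √t with hA
  have hvenv : ∀ x, v x ≤ t⁻¹ * envelope (√t) A x := fun x => ciSup_le fun n => by
    refine le_envelope (by positivity) (hle n x) ?_ ?_
    · refine (hexp 1 (by norm_num) (by norm_num) n x).trans_eq ?_
      congr 2; rw [hA]; field_simp; ring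
    · refine (hexp (-1) (by norm_num) (by norm_num) n x).trans_eq ?_
      congr 2; rw [hA]; field_simp; ring
  have hvm : Measurable v := Measurable.iSup fun n =>
    (hu (n + 1) (by omega)).1.comp (measurable_const.prodMk lineEquiv.measurable)
  obtain ⟨henvi, henv⟩ := envelope_integral hsq (show 0 ≤ A by positivity)
  have hvi : Integrable v := (henvi.const_mul t⁻¹).mono' hvm.aestronglyMeasurable
    (ae_of_all _ fun x => by rw [Real.norm_of_nonneg (hv0 x)]; exact hvenv x)
  have hupper : ∫ x, v x ≤ 2 * r + 8 / √t := by
    calc ∫ x, v x ≤ ∫ x, t⁻¹ * envelope (√t) A x :=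
          integral_mono hvi (henvi.const_mul _) hvenv
      _ = t⁻¹ * (2 * A + 2 * √t) := by rw [integral_const_mul, henv]
      _ = 2 * r + 8 * (√t / t) := by rw [hA]; field_simp; ring
      _ = _ := by rw [Real.sqrt_div_self', mul_one_div]
  have hlower : 2 * r * (t / (1 + t)) ≤ ∫ x, v x := by
    have h1 := hM 0
    simp only [zero_add, Nat.cast_one] at h1
    have key : ENNReal.ofReal (2 * (r * t)) ≤ ENNReal.ofReal (∫ x, (1 + t) * v x) := by
      rw [ofReal_integral_eq_lintegral_ofReal (hvi.const_mul _)
        (ae_of_all _ fun x => mul_nonneg (by positivity) (hv0 x))]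
      have : ENNReal.ofReal (2 * (r * t)) = ∫⁻ x, heatP t
          ((Ioo (-(r * t)) (r * t)).indicator fun _ => ENNReal.ofReal (1 : ℝ)) x := by
        rw [lintegral_heatP ht h1.meas_data, lintegral_indicator measurableSet_Ioo]
        simp only [ENNReal.ofReal_one, lintegral_const, one_mul, Measure.restrict_apply_univ,
          Real.volume_Ioo]
        congr 1; ring
      rw [this]
      refine lintegral_mono fun x => ?_
      have hne := ((h1.heatP_data_le ht x).trans_lt (by finiteness)).ne
      rw [← ENNReal.ofReal_toReal hne]
      refine ENNReal.ofReal_le_ofReal ((h1.heatP_le_mul ht x).trans ?_)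
      rw [ENNReal.toReal_ofReal (hu0 0 x), mul_comm]
      gcongr
      exact hv1 x
    rw [integral_const_mul, ENNReal.ofReal_le_ofReal_iff
      (mul_nonneg (by positivity) (integral_nonneg hv0))] at key
    rw [mul_div_assoc', div_le_iff₀ (by positivity)]
    linarith
  have hwi : Integrable fun x => 1 - Real.exp (-v x) := by
    refine hvi.mono' (by fun_prop) (ae_of_all _ fun x => ?_)
    have h1 := Real.add_one_le_exp (-v x)
    have h2 : Real.exp (-v x) ≤ 1 := Real.exp_le_one_iff.2 (by linarith [hv0 x])
    rw [Real.norm_of_nonneg (by linarith)]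
    linarith
  refine ⟨hlower, hupper, ?_, ?_⟩
  · calc 2 * r * (t / (1 + t)) ^ 2 = (t / (1 + t)) * (2 * r * (t / (1 + t))) := by ring
      _ ≤ (t / (1 + t)) * ∫ x, v x := by gcongr
      _ = ∫ x, (t / (1 + t)) * v x := (integral_const_mul _ _).symm
      _ ≤ _ := by
        refine integral_mono (hvi.const_mul _) hwi fun x => ?_
        change t / (1 + t) * v x ≤ 1 - Real.exp (-v x)
        have hp : 0 < 1 + v x := by linarith [hv0 x]
        have h1 : Real.exp (-v x) ≤ (1 + v x)⁻¹ := by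
          rw [Real.exp_neg]
          have := Real.add_one_le_exp (v x)
          gcongr
          linarith
        have h2 : t / (1 + t) * v x ≤ v x / (1 + v x) := by
          have h3 : t * v x ≤ 1 := by
            calc t * v x ≤ t * t⁻¹ := by gcongr; exact hvle x
              _ = 1 := mul_inv_cancel₀ ht.ne'
          rw [div_mul_eq_mul_div, div_le_div_iff₀ (by positivity) hp]
          nlinarith [hv0 x]
        have h4 : v x / (1 + v x) = 1 - (1 + v x)⁻¹ := by field_simp; ring
        linarith
  · refine (integral_mono hwi hvi fun x => ?_).trans hupper
    change 1 - Real.exp (-v x) ≤ v x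
    linarith [Real.add_one_le_exp (-v x)]

/-- in `d = 1`, with `u_t(x) = sup_{n≥1} u_{t,n}(t,x)` where `u_{t,n}` solves
the equation with data `n·1_{B(rt)}`, both `∫ u_t` and `∫ (1 - e^{-u_t})` tend to `2r`. -/
theorem stmt_17 (r : ℝ) (hr : 0 < r)
    (u : ℝ → ℕ → ℝ → EuclideanSpace ℝ (Fin 1) → ℝ)
    (hu : ∀ t : ℝ, 0 < t → ∀ n : ℕ, 1 ≤ n →
      IsMildSolution 1
        ((Metric.ball (0 : EuclideanSpace ℝ (Fin 1)) (r * t)).indicator fun _ => (n : ℝ))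
        (u t n)) :
    Tendsto (fun t : ℝ => ∫ x, ⨆ n : ℕ, u t (n + 1) t x) atTop (nhds (2 * r)) ∧
    Tendsto (fun t : ℝ => ∫ x, (1 - Real.exp (-(⨆ n : ℕ, u t (n + 1) t x))))
      atTop (nhds (2 * r)) := by
  have hb := fun t ht => integral_bounds hr ht (hu t ht)
  have hlim : Tendsto (fun t : ℝ => t / (1 + t)) atTop (nhds 1) := by
    have h1 : Tendsto (fun t : ℝ => 1 - (1 + t)⁻¹) atTop (nhds (1 - 0)) :=
      tendsto_const_nhds.sub (tendsto_inv_atTop_zero.comp (tendsto_atTop_add_const_left _ _ tendsto_id))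
    rw [sub_zero] at h1
    refine h1.congr' ?_
    filter_upwards [eventually_gt_atTop 0] with t ht
    field_simp
    ring
  have hup : Tendsto (fun t : ℝ => 2 * r + 8 / √t) atTop (nhds (2 * r)) := by
    have h1 : Tendsto (fun t : ℝ => 8 / √t) atTop (nhds 0) :=
      Real.tendsto_sqrt_atTop.const_div_atTop 8
    simpa using h1.const_add (2 * r)
  have hlo1 : Tendsto (fun t : ℝ => 2 * r * (t / (1 + t))) atTop (nhds (2 * r)) := by
    simpa using hlim.const_mul (2 * r)
  have hlo2 : Tendsto (fun t : ℝ => 2 * r * (t / (1 + t)) ^ 2) atTop (nhds (2 * r)) := by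
    simpa using (hlim.pow 2).const_mul (2 * r)
  constructor
  · refine tendsto_of_tendsto_of_tendsto_of_le_of_le' hlo1 hup ?_ ?_ <;>
      filter_upwards [eventually_gt_atTop 0] with t ht
    · exact (hb t ht).1
    · exact (hb t ht).2.1
  · refine tendsto_of_tendsto_of_tendsto_of_le_of_le' hlo2 hup ?_ ?_ <;>
      filter_upwards [eventually_gt_atTop 0] with t ht
    · exact (hb t ht).2.2.1
    · exact (hb t ht).2.2.2
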